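/- Semantic equivalence of wellformed sublevels is syntactic equality. Precisely: (i) if x ∈ E, y ∈ F and ⟦A(E,x,S)⟧σ = ⟦A(F,y,K)⟧σ for every valuation σ, then E = F, x = y and S = K; (ii) if S > 0, K > 0 and ⟦B(E,S)⟧σ = ⟦B(F,K)⟧σ for every valuation σ, then E = F and S = K; (iii) if x ∈ E and K > 0, then there is a valuation σ with ⟦A(E,x,S)⟧σ ≠ ⟦B(F,K)⟧σ. -/

import Mathlib

/-- The impredicative maximum on natural numbers. -/
def imaxN : ℕ → ℕ → ℕ
  | _, 0 => 0
  | i, (j+1) => max i (j+1)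

/-- Sublevels A(E,x,S) and B(E,S). -/
inductive SubLvl where
  | A : Finset ℕ → ℕ → ℕ → SubLvl
  | B : Finset ℕ → ℕ → SubLvl
deriving DecidableEq

/-- Value of a sublevel under a valuation. -/
def evalS (σ : ℕ → ℕ) : SubLvl → ℕ
  | .A E x S => if ∃ y ∈ E, σ y = 0 then 0 else σ x + S
  | .B E S => if ∃ y ∈ E, σ y = 0 then 0 else S

/-- Wellformed sublevels. -/
def Wf : SubLvl → Prop
  | .A E x _ => x ∈ E
  | .B _ S => 0 < S

/-- Semantic comparison of sublevels. -/
def leT (u v : SubLvl) : Prop := ∀ σ : ℕ → ℕ, evalS σ u ≤ evalS σ v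

/-!
The guard set of a wellformed sublevel is read off from the valuations at which it vanishes:
`z` is a guard iff the sublevel vanishes when `z ↦ 0` and every other variable is sent to `1`.
Under nowhere-zero valuations the guards play no role, so there `A(E,x,S)` is `σ x + S` and `B(E,S)`
is `S`; varying `σ` among them recovers `x` and `S`, and tells the two forms apart.
-/

namespace SubLvl

/-- The set `E` of guards of `A(E,x,S)` or `B(E,S)`: the variables whose vanishing forces the value
of the sublevel to be `0`. -/
def guards : SubLvl → Finset ℕ
  | .A E _ _ => E
  | .B E _ => E

section Guards

variable {u v : SubLvl}

theorem evalS_eq_zero_iff (hu : Wf u) (σ : ℕ → ℕ) :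
    evalS σ u = 0 ↔ ∃ y ∈ u.guards, σ y = 0 := by
  refine ⟨fun value_eq_zero => ?_, fun guard_eq_zero => by cases u <;> exact if_pos guard_eq_zero⟩
  by_contra no_guard_eq_zero
  cases u with
  | A E x S =>
    have body_eq_zero : σ x + S = 0 := (if_neg no_guard_eq_zero).symm.trans value_eq_zero
    exact no_guard_eq_zero ⟨x, hu, Nat.eq_zero_of_add_eq_zero_right body_eq_zero⟩
  | B E S =>
    have body_eq_zero : S = 0 := (if_neg no_guard_eq_zero).symm.trans value_eq_zero
    exact Nat.ne_of_gt hu body_eq_zero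

theorem evalS_update_one_zero_eq_zero_iff (hu : Wf u) (z : ℕ) :
    evalS (Function.update 1 z 0) u = 0 ↔ z ∈ u.guards := by
  simp [evalS_eq_zero_iff hu, Function.update_apply]

theorem guards_eq_of_forall_evalS_eq (hu : Wf u) (hv : Wf v) (h : ∀ σ, evalS σ u = evalS σ v) :
    u.guards = v.guards := by
  ext z
  rw [← evalS_update_one_zero_eq_zero_iff hu, ← evalS_update_one_zero_eq_zero_iff hv, h]

end Guards

section NowhereZero

variable {E F : Finset ℕ} {x y S K : ℕ}

theorem var_eq_and_shift_eq_of_forall_evalS_A_eq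
    (h : ∀ σ, evalS σ (A E x S) = evalS σ (A F y K)) : x = y ∧ S = K := by
  have body_eq (σ : ℕ → ℕ) (hσ : ∀ z, σ z ≠ 0) : σ x + S = σ y + K := by
    simpa [evalS, hσ] using h σ
  have shift_eq : S = K := Nat.add_left_cancel (body_eq 1 fun _ => one_ne_zero)
  refine ⟨?_, shift_eq⟩
  by_contra x_ne_y
  have two_add_eq : 2 + S = 1 + K := by
    simpa [Function.update_of_ne (Ne.symm x_ne_y)] using
      body_eq (Function.update 1 x 2) fun z => by by_cases hz : z = x <;> simp [hz]
  lia

theorem const_eq_of_forall_evalS_B_eq (h : ∀ σ, evalS σ (B E S) = evalS σ (B F K)) : S = K := by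
  simpa [evalS] using h 1

theorem exists_evalS_A_ne_evalS_B (E F : Finset ℕ) (x S K : ℕ) :
    ∃ σ, evalS σ (A E x S) ≠ evalS σ (B F K) := by
  by_contra! h
  have one_add_eq : 1 + S = K := by simpa [evalS] using h 1
  have two_add_eq : 2 + S = K := by simpa [evalS] using h 2
  lia

end NowhereZero

theorem eq_of_forall_evalS_eq {u v : SubLvl} (hu : Wf u) (hv : Wf v)
    (h : ∀ σ, evalS σ u = evalS σ v) : u = v := by
  have guards_eq : u.guards = v.guards := guards_eq_of_forall_evalS_eq hu hv h
  match u, v with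
  | A E x S, A F y K =>
    obtain ⟨rfl, rfl⟩ := var_eq_and_shift_eq_of_forall_evalS_A_eq h
    exact congrArg (A · x S) guards_eq
  | B E S, B F K =>
    obtain rfl := const_eq_of_forall_evalS_B_eq h
    exact congrArg (B · S) guards_eq
  | A E x S, B F K =>
    obtain ⟨σ, hσ⟩ := exists_evalS_A_ne_evalS_B E F x S K
    exact absurd (h σ) hσ
  | B E S, A F y K =>
    obtain ⟨σ, hσ⟩ := exists_evalS_A_ne_evalS_B F E y K S
    exact absurd (h σ).symm hσ

end SubLvl

theorem sublevel_semantic_eq_is_syntactic_eq :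
    (∀ (E F : Finset ℕ) (x y S K : ℕ), x ∈ E → y ∈ F →
      (∀ σ : ℕ → ℕ, evalS σ (SubLvl.A E x S) = evalS σ (SubLvl.A F y K)) →
      E = F ∧ x = y ∧ S = K) ∧
    (∀ (E F : Finset ℕ) (S K : ℕ), 0 < S → 0 < K →
      (∀ σ : ℕ → ℕ, evalS σ (SubLvl.B E S) = evalS σ (SubLvl.B F K)) →
      E = F ∧ S = K) ∧
    (∀ (E F : Finset ℕ) (x S K : ℕ), x ∈ E → 0 < K →
      ∃ σ : ℕ → ℕ, evalS σ (SubLvl.A E x S) ≠ evalS σ (SubLvl.B F K)) := by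
  refine ⟨fun E F x y S K hx hy h => ?_, fun E F S K hS hK h => ?_, fun E F x S K _ _ => ?_⟩
  · exact SubLvl.A.inj (SubLvl.eq_of_forall_evalS_eq hx hy h)
  · exact SubLvl.B.inj (SubLvl.eq_of_forall_evalS_eq hS hK h)
  · exact SubLvl.exists_evalS_A_ne_evalS_B E F x S K
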